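/- Let N ≥ 1, r₁ ≥ 1, sizes s₁,…,s_{r₁} ≥ 1, and complex numbers κ₁,…,κ_{r₁}, κ̄₁,…,κ̄_{r₁} with κ_μ ≠ κ̄_ν for all μ, ν. For each ν let q̄^{(ν)}_i, p^{(ν)}_i ∈ ℂ^N be column vectors and p̄^{(ν)}_i, q^{(ν)}_i row vectors (1 ≤ i ≤ s_ν), and set Γ(k) = I + Σ_ν S̄_ν(k) and Γinv(k) = I + Σ_ν S_ν(k), where S̄_ν is the upper block at κ̄_ν of size s_ν built from q̄^{(ν)}, p̄^{(ν)} and S_ν is the lower block at κ_ν of size s_ν built from p^{(ν)}, q^{(ν)}. Assume: Γ(k)Γinv(k) = I for all k not among the κ_ν, κ̄_ν; for each point κ among the κ_ν the row vectors {q^{(ν)}_1 : κ_ν = κ} are linearly independent; and the m×m matrix K̄ defined in the context is invertible (m = s₁+…+s_{r₁}). Then for every k not among the κ̄_ν, Γ(k) = I − P · K̄^{−1} · 𝒟̄(k) · P̄, where P is the N×m matrix with columns p^{(1)}_1,…,p^{(1)}_{s₁},…,p^{(r₁)}_1,…,p^{(r₁)}_{s_{r₁}}, P̄ is the m×N matrix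 with rows p̄^{(1)}_1,…,p̄^{(1)}_{s₁},…,p̄^{(r₁)}_1,…,p̄^{(r₁)}_{s_{r₁}}, and 𝒟̄(k) is the m×m block-diagonal matrix whose ν-th diagonal block is the s_ν×s_ν matrix D̄_ν(k) with (a,b) entry (k−κ̄_ν)^{−(a−b+1)} for a ≥ b and 0 for a < b. -/

import Mathlib

open Matrix

/-- The "upper block at `κ` of size `s`":
`S̄(k) = Σ_{l=1}^{s} Σ_{j=1}^{l} q_j p_{l+1−j} (k−κ)^{−(s+1−l)}` (columns `q`, rows `p`). -/
noncomputable def upperBlock {N : ℕ} (s : ℕ) (κ : ℂ) (q p : ℕ → Fin N → ℂ) (k : ℂ) :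
    Matrix (Fin N) (Fin N) ℂ :=
  ∑ l ∈ Finset.Icc 1 s, ∑ j ∈ Finset.Icc 1 l,
    (k - κ) ^ (-((s : ℤ) + 1 - (l : ℤ))) • vecMulVec (q j) (p (l + 1 - j))

/-- The "lower block at `κ` of size `s`":
`S(k) = Σ_{l=1}^{s} Σ_{j=1}^{l} p_{l+1−j} q_j (k−κ)^{−(s+1−l)}` (columns `p`, rows `q`). -/
noncomputable def lowerBlock {N : ℕ} (s : ℕ) (κ : ℂ) (p q : ℕ → Fin N → ℂ) (k : ℂ) :
    Matrix (Fin N) (Fin N) ℂ :=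
  ∑ l ∈ Finset.Icc 1 s, ∑ j ∈ Finset.Icc 1 l,
    (k - κ) ^ (-((s : ℤ) + 1 - (l : ℤ))) • vecMulVec (p (l + 1 - j)) (q j)

/-- `H^{(ν)}_{−j}` : the `sν×sν` matrix with `(α,β)` entry `1` when `α = β + j`, else `0`. -/
def Hmat (sν : ℕ) (j : ℕ) : Matrix (Fin sν) (Fin sν) ℂ :=
  Matrix.of fun α β => if (α : ℕ) = (β : ℕ) + j then 1 else 0

/-- `Q̄_l^{(ν,μ)}` : the `sν×sμ` matrix with (1-based) `(a,b)` entry `p̄^{(ν)}_a ⬝ p^{(μ)}_{b−l}`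
when `b > l` and `0` otherwise. -/
noncomputable def Qbar {N : ℕ} (sν sμ : ℕ) (pbν pμ : ℕ → Fin N → ℂ) (l : ℕ) :
    Matrix (Fin sν) (Fin sμ) ℂ :=
  Matrix.of fun a b => if l < (b : ℕ) + 1 then pbν ((a : ℕ) + 1) ⬝ᵥ pμ ((b : ℕ) + 1 - l) else 0

/-- The block `K̄^{(ν,μ)} = Σ_{j,l} ((−1)^l (j+l)!/(j! l!)) H^{(ν)}_{−j} Q̄_l^{(ν,μ)}
(κ_μ − κ̄_ν)^{−(j+l+1)}`. -/
noncomputable def KbarBlock {N : ℕ} (sν sμ : ℕ) (κμ κbν : ℂ) (pbν pμ : ℕ → Fin N → ℂ) :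
    Matrix (Fin sν) (Fin sμ) ℂ :=
  ∑ j ∈ Finset.range sν, ∑ l ∈ Finset.range sμ,
    (((-1 : ℂ) ^ l * (Nat.factorial (j + l) : ℂ) /
        ((Nat.factorial j : ℂ) * (Nat.factorial l : ℂ))) *
      (κμ - κbν) ^ (-((j : ℤ) + (l : ℤ) + 1))) • (Hmat sν j * Qbar sν sμ pbν pμ l)

/-- The `m×m` matrix `K̄` (`m = s₁+…+s_{r₁}`) whose `(ν,μ)` block is `K̄^{(ν,μ)}`. -/
noncomputable def Kbar {N r₁ : ℕ} (s : Fin r₁ → ℕ) (κ κb : Fin r₁ → ℂ)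
    (pb p : Fin r₁ → ℕ → Fin N → ℂ) :
    Matrix ((ν : Fin r₁) × Fin (s ν)) ((ν : Fin r₁) × Fin (s ν)) ℂ :=
  Matrix.of fun x y => KbarBlock (s x.1) (s y.1) (κ y.1) (κb x.1) (pb x.1) (p y.1) x.2 y.2

/-- `𝒟̄(k)` : the block-diagonal matrix whose `ν`-th diagonal block has (0-based) `(a,b)` entry
`(k−κ̄_ν)^{−(a−b+1)}` for `a ≥ b` and `0` for `a < b`. -/
noncomputable def DbarMat {r₁ : ℕ} (s : Fin r₁ → ℕ) (κb : Fin r₁ → ℂ) (k : ℂ) :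
    Matrix ((ν : Fin r₁) × Fin (s ν)) ((ν : Fin r₁) × Fin (s ν)) ℂ :=
  Matrix.of fun x y =>
    if x.1 = y.1 ∧ (y.2 : ℕ) ≤ (x.2 : ℕ) then
      (k - κb x.1) ^ (-(((x.2 : ℕ) : ℤ) - ((y.2 : ℕ) : ℤ) + 1))
    else 0

open Filter Topology Asymptotics

/-- truncated expansion -/
def TE (f : ℂ → ℂ) (φ : ℕ → ℂ) (s : ℕ) : Prop :=
  (fun ε => f ε - ∑ l ∈ Finset.range s, φ l * ε ^ l) =O[𝓝[≠] (0:ℂ)] fun ε => ε ^ s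

/-- bounded near zero -/
def BD (f : ℂ → ℂ) : Prop := f =O[𝓝[≠] (0:ℂ)] fun _ => (1:ℂ)

lemma BD.add {f g : ℂ → ℂ} (hf : BD f) (hg : BD g) : BD (fun ε => f ε + g ε) :=
  IsBigO.add hf hg

lemma BD.sub {f g : ℂ → ℂ} (hf : BD f) (hg : BD g) : BD (fun ε => f ε - g ε) :=
  IsBigO.sub hf hg

lemma BD.mul {f g : ℂ → ℂ} (hf : BD f) (hg : BD g) : BD (fun ε => f ε * g ε) := by
  have := IsBigO.mul hf hg
  simpa [BD] using this

lemma BD.sum {ι : Type*} {t : Finset ι} {f : ι → ℂ → ℂ} (hf : ∀ i ∈ t, BD (f i)) :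
    BD (fun ε => ∑ i ∈ t, f i ε) := IsBigO.fun_sum hf

lemma BD.of_cont {f : ℂ → ℂ} (hf : ContinuousAt f 0) : BD f :=
  (hf.tendsto.mono_left nhdsWithin_le_nhds).isBigO_one ℂ

lemma BD.const (c : ℂ) : BD (fun _ => c) := BD.of_cont continuousAt_const

lemma pow_bigO {m n : ℕ} (h : n ≤ m) :
    (fun ε : ℂ => ε ^ m) =O[𝓝[≠] (0:ℂ)] fun ε => ε ^ n := by
  have h1 : BD (fun ε : ℂ => ε ^ (m - n)) := BD.of_cont (by fun_prop)
  have := IsBigO.mul (isBigO_refl (fun ε : ℂ => ε ^ n) (𝓝[≠] (0:ℂ))) h1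
  simpa [← pow_add, Nat.add_sub_cancel' h] using this

lemma TE.congr {f g : ℂ → ℂ} {φ ψ : ℕ → ℂ} {s : ℕ} (hf : TE f φ s)
    (h1 : ∀ ε, g ε = f ε) (h2 : ∀ l < s, ψ l = φ l) : TE g ψ s := by
  unfold TE at *
  refine hf.congr_left fun ε => ?_
  rw [h1]
  congr 1
  exact Finset.sum_congr rfl fun l hl => by rw [h2 l (Finset.mem_range.1 hl)]

lemma TE.add {f g : ℂ → ℂ} {φ ψ : ℕ → ℂ} {s : ℕ} (hf : TE f φ s) (hg : TE g ψ s) :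
    TE (fun ε => f ε + g ε) (fun l => φ l + ψ l) s := by
  unfold TE at *
  refine (IsBigO.add hf hg).congr_left fun ε => ?_
  simp only [add_mul, Finset.sum_add_distrib]; ring

lemma TE.const_mul {f : ℂ → ℂ} {φ : ℕ → ℂ} {s : ℕ} (c : ℂ) (hf : TE f φ s) :
    TE (fun ε => c * f ε) (fun l => c * φ l) s := by
  unfold TE at *
  refine (IsBigO.const_mul_left hf c).congr_left fun ε => ?_
  simp only [mul_assoc, ← Finset.mul_sum]; ring

lemma TE.zero {s : ℕ} : TE (fun _ => 0) (fun _ => 0) s := by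
  unfold TE; simpa using isBigO_zero _ _

lemma TE.sum {ι : Type*} (t : Finset ι) {f : ι → ℂ → ℂ} {φ : ι → ℕ → ℂ} {s : ℕ}
    (hf : ∀ i, TE (f i) (φ i) s) :
    TE (fun ε => ∑ i ∈ t, f i ε) (fun l => ∑ i ∈ t, φ i l) s := by
  classical
  induction t using Finset.induction_on with
  | empty => simpa using TE.zero
  | insert a t ha ih => simpa [Finset.sum_insert ha] using (hf a).add ih

lemma TE.shift {f : ℂ → ℂ} {φ : ℕ → ℂ} {s : ℕ} (hf : TE f φ s) (b : ℕ) :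
    TE (fun ε => ε ^ b * f ε) (fun n => if b ≤ n then φ (n - b) else 0) s := by
  induction b with
  | zero => simpa using hf
  | succ b ih =>
    set ψ : ℕ → ℂ := fun n => if b ≤ n then φ (n - b) else 0 with hψ
    unfold TE at *
    have h1 : (fun ε : ℂ => ε * (ε ^ b * f ε - ∑ l ∈ Finset.range s, ψ l * ε ^ l))
        =O[𝓝[≠] (0:ℂ)] fun ε => ε ^ s := by
      have hb : BD (fun ε : ℂ => ε) := BD.of_cont (by fun_prop)
      simpa using IsBigO.mul hb ih
    have key : ∀ ε : ℂ, ∑ l ∈ Finset.range s,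
        (if b + 1 ≤ l then φ (l - (b + 1)) else 0) * ε ^ l =
        ε * (∑ l ∈ Finset.range s, ψ l * ε ^ l) - (if s = 0 then 0 else ψ (s - 1)) * ε ^ s := by
      intro ε
      cases s with
      | zero => simp
      | succ s =>
        rw [Finset.sum_range_succ', Finset.sum_range_succ]
        simp only [Nat.add_le_add_iff_right, Nat.add_sub_add_right, hψ]
        simp only [mul_add, Finset.mul_sum, pow_succ]
        simp
        rw [eq_sub_iff_add_eq]
        congr 1
        · exact Finset.sum_congr rfl fun x _ => by split_ifs <;> ring
        · split_ifs <;> ring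
    refine (h1.add ((isBigO_refl (fun ε : ℂ => ε ^ s) _).const_mul_left
      (if s = 0 then 0 else ψ (s - 1)))).congr_left fun ε => ?_
    rw [key]; ring

lemma TE.mul {f g : ℂ → ℂ} {φ γ : ℕ → ℂ} {s : ℕ} (hf : TE f φ s) (hg : TE g γ s)
    (hb : BD g) : TE (fun ε => f ε * g ε)
      (fun n => ∑ l ∈ Finset.range s, φ l * if l ≤ n then γ (n - l) else 0) s := by
  have h1 := TE.sum (Finset.range s) fun l => (hg.shift l).const_mul (φ l)
  have h2 : (fun ε => (f ε - ∑ l ∈ Finset.range s, φ l * ε ^ l) * g ε)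
      =O[𝓝[≠] (0:ℂ)] fun ε => ε ^ s := by
    simpa using IsBigO.mul hf hb
  unfold TE at *
  refine (h1.add h2).congr_left fun ε => ?_
  rw [sub_mul, Finset.sum_mul]
  simp only [mul_assoc]; ring

lemma TE.poly (γ : ℕ → ℂ) (s : ℕ) :
    TE (fun ε => ∑ l ∈ Finset.range s, γ l * ε ^ l) γ s := by
  unfold TE; simpa using isBigO_zero _ _

lemma TE.unique {f : ℂ → ℂ} {φ : ℕ → ℂ} {s : ℕ} (hf : TE f φ s)
    (h0 : f =O[𝓝[≠] (0:ℂ)] fun ε => ε ^ s) : ∀ n < s, φ n = 0 := by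
  intro n
  induction n using Nat.strong_induction_on with
  | _ n ih =>
  intro hn
  have h1 : (fun ε : ℂ => ∑ l ∈ Finset.range s, φ l * ε ^ l) =O[𝓝[≠] (0:ℂ)] fun ε => ε ^ (n+1) := by
    refine IsBigO.trans ?_ (pow_bigO (show n + 1 ≤ s from hn))
    exact (h0.sub hf).congr_left fun ε => by ring
  have h2 : (fun ε : ℂ => ∑ l ∈ (Finset.range s).erase n, φ l * ε ^ l)
      =O[𝓝[≠] (0:ℂ)] fun ε => ε ^ (n+1) := by
    refine IsBigO.fun_sum fun l hl => ?_
    rw [Finset.mem_erase, Finset.mem_range] at hl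
    rcases lt_or_gt_of_ne hl.1 with h | h
    · simpa [ih l h hl.2] using isBigO_zero _ _
    · exact (pow_bigO h).const_mul_left _
  have h3 : (fun ε : ℂ => φ n * ε ^ n) =O[𝓝[≠] (0:ℂ)] fun ε => ε ^ (n+1) := by
    refine (h1.sub h2).congr_left fun ε => ?_
    rw [← Finset.add_sum_erase _ _ (Finset.mem_range.2 hn)]; ring
  have h4 : (fun ε : ℂ => φ n) =O[𝓝[≠] (0:ℂ)] fun ε => ε := by
    have := h3.mul (isBigO_refl (fun ε : ℂ => (ε ^ n)⁻¹) (𝓝[≠] (0:ℂ)))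
    refine this.congr' ?_ ?_
    · filter_upwards [self_mem_nhdsWithin] with ε hε
      have : ε ≠ 0 := hε
      field_simp
    · filter_upwards [self_mem_nhdsWithin] with ε hε
      have : ε ≠ 0 := hε
      field_simp
      ring
  have h5 : Tendsto (fun ε : ℂ => φ n) (𝓝[≠] (0:ℂ)) (𝓝 0) :=
    h4.trans_tendsto (tendsto_id.mono_left nhdsWithin_le_nhds)
  exact tendsto_nhds_unique tendsto_const_nhds h5

/-- Taylor coefficients -/
noncomputable def uco (c : ℂ) (j l : ℕ) : ℂ :=
  ((-1 : ℂ) ^ l * (Nat.factorial (j + l) : ℂ) /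
        ((Nat.factorial j : ℂ) * (Nat.factorial l : ℂ))) * c ^ (-((j : ℤ) + (l : ℤ) + 1))

lemma uco_zero (c : ℂ) (l : ℕ) : uco c 0 l = (-1) ^ l * (c ^ (l+1))⁻¹ := by
  unfold uco
  have : (Nat.factorial l : ℂ) ≠ 0 := by exact_mod_cast Nat.factorial_ne_zero l
  rw [_root_.zpow_neg]
  have h2 : ((0:ℕ) : ℤ) + (l:ℤ) + 1 = ((l + 1 : ℕ) : ℤ) := by push_cast; ring
  rw [h2, zpow_natCast]
  simp only [zero_add, Nat.factorial_zero, Nat.cast_one, one_mul]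
  rw [mul_div_assoc, div_self this, mul_one]

lemma uco_j0 (c : ℂ) (hc : c ≠ 0) (j : ℕ) : c * uco c (j+1) 0 = uco c j 0 := by
  unfold uco
  have : (Nat.factorial j : ℂ) ≠ 0 := by exact_mod_cast Nat.factorial_ne_zero j
  have h3 : (Nat.factorial (j+1) : ℂ) ≠ 0 := by exact_mod_cast Nat.factorial_ne_zero (j+1)
  have h1 : c ^ (-(((j+1:ℕ):ℤ) + ((0:ℕ):ℤ) + 1)) = c ^ (-((j:ℤ) + ((0:ℕ):ℤ) + 1)) * c⁻¹ := by
    rw [← zpow_sub_one₀ hc]; congr 1 <;> omega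
  rw [h1]
  simp only [add_zero, Nat.factorial_zero, pow_zero]
  field_simp

lemma uco_jl (c : ℂ) (hc : c ≠ 0) (j l : ℕ) :
    c * uco c (j+1) (l+1) + uco c (j+1) l = uco c j (l+1) := by
  unfold uco
  have h1 : c ^ (-(((j+1:ℕ):ℤ) + ((l+1:ℕ):ℤ) + 1)) = c ^ (-((j:ℤ) + (l:ℤ) + 1)) * c⁻¹ * c⁻¹ := by
    rw [← zpow_sub_one₀ hc, ← zpow_sub_one₀ hc]; congr 1 <;> omega
  have h2 : c ^ (-(((j+1:ℕ):ℤ) + (l:ℤ) + 1)) = c ^ (-((j:ℤ) + (l:ℤ) + 1)) * c⁻¹ := by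
    rw [← zpow_sub_one₀ hc]; congr 1 <;> omega
  have h3 : c ^ (-((j:ℤ) + ((l+1:ℕ):ℤ) + 1)) = c ^ (-((j:ℤ) + (l:ℤ) + 1)) * c⁻¹ := by
    rw [← zpow_sub_one₀ hc]; congr 1 <;> omega
  rw [h1, h2, h3]
  have e1 : j + 1 + (l + 1) = j + l + 1 + 1 := by ring
  have e2 : j + 1 + l = j + l + 1 := by ring
  have e3 : j + (l + 1) = j + l + 1 := by ring
  rw [e1, e2, e3]
  simp only [Nat.factorial_succ, pow_succ]
  have f1 : (Nat.factorial j : ℂ) ≠ 0 := by exact_mod_cast Nat.factorial_ne_zero j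
  have f2 : (Nat.factorial l : ℂ) ≠ 0 := by exact_mod_cast Nat.factorial_ne_zero l
  have f3 : ((j:ℂ)+1) ≠ 0 := by exact_mod_cast Nat.succ_ne_zero j
  have f4 : ((l:ℂ)+1) ≠ 0 := by exact_mod_cast Nat.succ_ne_zero l
  push_cast
  field_simp
  ring

lemma TE.step {c : ℂ} (hc : c ≠ 0) {f : ℂ → ℂ} {φ ψ : ℕ → ℂ} {s : ℕ} (hf : TE f φ s)
    (h0 : c * ψ 0 = φ 0) (h1 : ∀ l, c * ψ (l+1) + ψ l = φ (l+1)) :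
    TE (fun ε => (c + ε)⁻¹ * f ε) ψ s := by
  have hB : BD (fun ε => (c + ε)⁻¹) := BD.of_cont (by
    apply ContinuousAt.inv₀ (by fun_prop); simpa using hc)
  have key : ∀ ε, (c + ε) * ∑ l ∈ Finset.range s, ψ l * ε ^ l =
      ∑ l ∈ Finset.range s, φ l * ε ^ l + (if s = 0 then 0 else ψ (s-1)) * ε ^ s := by
    intro ε
    clear hf
    induction s with
    | zero => simp
    | succ s ih =>
      rw [Finset.sum_range_succ, mul_add, ih, Finset.sum_range_succ]
      cases s with
      | zero => simp; linear_combination h0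
      | succ s => simp; linear_combination ε ^ (s+1) * h1 s
  have h3 : (fun ε => (c + ε)⁻¹ * ((f ε - ∑ l ∈ Finset.range s, φ l * ε ^ l) -
      (if s = 0 then 0 else ψ (s-1)) * ε ^ s)) =O[𝓝[≠] (0:ℂ)] fun ε => ε ^ s := by
    simpa using IsBigO.mul hB (IsBigO.sub hf ((isBigO_refl (fun ε : ℂ => ε ^ s) _).const_mul_left
      (if s = 0 then 0 else ψ (s - 1))))
  have hne : ∀ᶠ ε in 𝓝[≠] (0:ℂ), c + ε ≠ 0 := by
    apply Filter.Eventually.filter_mono nhdsWithin_le_nhds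
    have : ContinuousAt (fun ε : ℂ => c + ε) 0 := by fun_prop
    exact this.eventually_ne (by simpa using hc)
  unfold TE
  refine h3.congr' ?_ (EventuallyEq.rfl)
  filter_upwards [hne] with ε hε
  have := key ε
  field_simp
  linear_combination this

lemma TE.one (s : ℕ) : TE (fun _ => 1) (fun l => if l = 0 then 1 else 0) s := by
  unfold TE
  cases s with
  | zero => simpa only [BD, Finset.range_zero, Finset.sum_empty, sub_zero, pow_zero] using BD.const 1
  | succ s => simpa [Finset.sum_range_succ'] using isBigO_zero _ _

lemma TE.inv {c : ℂ} (hc : c ≠ 0) (s j : ℕ) :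
    TE (fun ε => ((c + ε) ^ (j + 1))⁻¹) (uco c j) s := by
  induction j with
  | zero =>
    refine ((TE.one s).step (ψ := uco c 0) hc ?_ ?_).congr (fun ε => by simp) (fun _ _ => rfl)
    · simp [uco_zero, hc]
    · intro l
      simp only [uco_zero]
      field_simp
      simp
      ring
  | succ j ih =>
    refine (ih.step (ψ := uco c (j+1)) hc (uco_j0 c hc j) (uco_jl c hc j)).congr (fun ε => ?_)
      (fun _ _ => rfl)
    rw [pow_succ _ (j+1), mul_inv, mul_comm]

lemma TE.row {c : ℂ} (hc : c ≠ 0) (s j : ℕ) (γ : ℕ → ℂ) :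
    TE (fun ε => ((c + ε) ^ (j + 1))⁻¹ * ∑ l ∈ Finset.range s, γ l * ε ^ l)
      (fun n => ∑ l ∈ Finset.range s, uco c j l * if l ≤ n then γ (n - l) else 0) s := by
  have h1 := TE.inv hc s j
  have h2 := TE.poly γ s
  have h3 : BD (fun ε => ∑ l ∈ Finset.range s, γ l * ε ^ l) := BD.of_cont (by fun_prop)
  exact TE.mul h1 h2 h3

lemma upper_eq {N r₁ : ℕ} (s : Fin r₁ → ℕ) (κb : Fin r₁ → ℂ) (qb pb : Fin r₁ → ℕ → Fin N → ℂ)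
    (k : ℂ) (i j : Fin N) :
    (∑ ν : Fin r₁, upperBlock (s ν) (κb ν) (qb ν) (pb ν) k) i j =
    ∑ ν : Fin r₁, ∑ a : Fin (s ν), qb ν (s ν - a) i * 
      ∑ b ∈ Finset.range (a + 1), ((k - κb ν) ^ (a - b + 1))⁻¹ * pb ν (b + 1) j := by
  rw [Matrix.sum_apply]
  refine Finset.sum_congr rfl fun ν _ => ?_
  rw [Fin.sum_univ_eq_sum_range (fun a => qb ν (s ν - a) i *
      ∑ b ∈ Finset.range (a + 1), ((k - κb ν) ^ (a - b + 1))⁻¹ * pb ν (b + 1) j)]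
  simp only [upperBlock, Matrix.sum_apply, Matrix.smul_apply, vecMulVec_apply, Finset.mul_sum]
  rw [Finset.sum_sigma', Finset.sum_sigma']
  refine Finset.sum_bij' (fun x _ => ⟨s ν - x.2, x.1 - x.2⟩)
    (fun x _ => ⟨s ν - x.1 + x.2, s ν - x.1⟩) ?_ ?_ ?_ ?_ ?_
  · rintro ⟨l, m⟩ h; simp at h ⊢; omega
  · rintro ⟨l, m⟩ h; simp at h ⊢; omega
  · rintro ⟨l, m⟩ h; simp at h ⊢; omega
  · rintro ⟨l, m⟩ h; simp at h ⊢; omega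
  · rintro ⟨l, m⟩ h
    simp at h ⊢
    have e1 : -((s ν : ℤ) + 1 - l) = -((s ν - m - (l - m) + 1 : ℕ) : ℤ) := by omega
    have e2 : l - m + 1 = l + 1 - m := by omega
    have e3 : s ν - (s ν - m) = m := by omega
    have e4 : (k - κb ν) ^ (-((s ν : ℤ) + 1 - l)) = ((k - κb ν) ^ (s ν - m - (l - m) + 1))⁻¹ := by
      rw [e1, _root_.zpow_neg, zpow_natCast]
    rw [← e4, e2, e3, neg_sub]
    ring

lemma D_eq {N r₁ : ℕ} (s : Fin r₁ → ℕ) (κb : Fin r₁ → ℂ) (pb : Fin r₁ → ℕ → Fin N → ℂ)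
    (Pbmat : Matrix ((ν : Fin r₁) × Fin (s ν)) (Fin N) ℂ)
    (hPbmat : ∀ x i, Pbmat x i = pb x.1 ((x.2 : ℕ) + 1) i) (k : ℂ) (ν : Fin r₁) (a : Fin (s ν))
    (j : Fin N) :
    (DbarMat s κb k * Pbmat) ⟨ν, a⟩ j =
      ∑ b ∈ Finset.range (a + 1), ((k - κb ν) ^ ((a:ℕ) - b + 1))⁻¹ * pb ν (b + 1) j := by
  rw [Matrix.mul_apply, Fintype.sum_sigma, Finset.sum_eq_single ν]
  · simp only [DbarMat, Matrix.of_apply, hPbmat, true_and]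
    rw [Fin.sum_univ_eq_sum_range (fun b => (if b ≤ (a:ℕ) then
      (k - κb ν) ^ (-(((a : ℕ) : ℤ) - ((b : ℕ) : ℤ) + 1)) else 0) * pb ν (b + 1) j)]
    have hsub : Finset.range (a+1) ⊆ Finset.range (s ν) := by
      intro x; simp; omega
    rw [← Finset.sum_subset hsub]
    · refine Finset.sum_congr rfl fun b hb => ?_
      have hb : b ≤ (a:ℕ) := by simp at hb; omega
      have e1 : (((a : ℕ) : ℤ) - ((b : ℕ) : ℤ) + 1) = (((a:ℕ) - b + 1 : ℕ) : ℤ) := by omega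
      rw [if_pos hb, e1, _root_.zpow_neg, zpow_natCast]
    · intro x _ hx
      rw [if_neg (by simp at hx; omega), zero_mul]
  · intro μ _ hμ
    refine Finset.sum_eq_zero fun b _ => ?_
    simp [DbarMat, hμ.symm]
  · simp

lemma K_eq {N r₁ : ℕ} (s : Fin r₁ → ℕ) (κ κb : Fin r₁ → ℂ) (pb p : Fin r₁ → ℕ → Fin N → ℂ)
    (ν μ : Fin r₁) (a : Fin (s ν)) (n : Fin (s μ)) :
    Kbar s κ κb pb p ⟨ν, a⟩ ⟨μ, n⟩ = ∑ b ∈ Finset.range (a + 1), ∑ l ∈ Finset.range (s μ),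
      uco (κ μ - κb ν) (a - b) l *
        if l ≤ (n:ℕ) then pb ν (b + 1) ⬝ᵥ p μ (n - l + 1) else 0 := by
  simp only [Kbar, Matrix.of_apply, KbarBlock, Matrix.sum_apply, Matrix.smul_apply]
  have hsub : Finset.range (a+1) ⊆ Finset.range (s ν) := by
    intro x; simp; omega
  have hHQ : ∀ j l, (Hmat (s ν) j * Qbar (s ν) (s μ) (pb ν) (p μ) l) a n =
      if j ≤ (a:ℕ) then (if l ≤ (n:ℕ) then pb ν (a - j + 1) ⬝ᵥ p μ (n - l + 1) else 0) else 0 := by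
    intro j l
    rw [Matrix.mul_apply]
    split_ifs with h1 h2
    · rw [Finset.sum_eq_single ⟨a - j, by omega⟩]
      · have e1 : (a:ℕ) = a - j + j := by omega
        have e2 : l < (n:ℕ) + 1 := by omega
        have e3 : (n:ℕ) - l + 1 = n + 1 - l := by omega
        simp only [Hmat, Qbar, Matrix.of_apply, if_pos e1, if_pos e2, e3, one_mul]
      · intro b _ hb
        have : ¬ ((a:ℕ) = b + j) := by
          intro h; apply hb; ext; simp; omega
        simp [Hmat, this]
      · simp
    · refine Finset.sum_eq_zero fun b _ => ?_
      have e2 : ¬ l < (n:ℕ) + 1 := by omega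
      simp only [Qbar, Matrix.of_apply, if_neg e2, mul_zero]
    · refine Finset.sum_eq_zero fun b _ => ?_
      have e2 : ¬ ((a:ℕ) = b + j) := by omega
      simp only [Hmat, Matrix.of_apply, if_neg e2, zero_mul]
  simp only [hHQ]
  rw [← Finset.sum_subset hsub, ← Finset.sum_range_reflect]
  · refine Finset.sum_congr rfl fun b hb => ?_
    have hb : b ≤ (a:ℕ) := by simp at hb; omega
    refine Finset.sum_congr rfl fun l hl => ?_
    have e : (a:ℕ) + 1 - 1 - b = (a:ℕ) - b := by omega
    have e2 : (a:ℕ) - ((a:ℕ) - b) = b := by omega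
    rw [e, if_pos (Nat.sub_le _ _), e2]
    rfl
  · intro x _ hx
    refine Finset.sum_eq_zero fun l _ => ?_
    rw [if_neg (by simp at hx; omega), smul_zero]

lemma low_cont {N : ℕ} (s : ℕ) (κ κ₀ : ℂ) (h : κ ≠ κ₀) (p q : ℕ → Fin N → ℂ) (i j : Fin N) :
    BD (fun ε => lowerBlock s κ p q (κ₀ + ε) i j) := by
  simp only [lowerBlock, Matrix.sum_apply, Matrix.smul_apply]
  refine BD.sum fun l _ => BD.sum fun m _ => ?_
  refine BD.mul (BD.of_cont ?_) (BD.const _)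
  refine ContinuousAt.zpow₀ (by fun_prop) _ (Or.inl ?_)
  simpa [sub_eq_zero] using h.symm

/-- polynomial -/
noncomputable def pl (s : ℕ) (γ : ℕ → ℂ) (ε : ℂ) : ℂ := ∑ l ∈ Finset.range s, γ (l + 1) * ε ^ l

lemma pl_cont (s : ℕ) (γ : ℕ → ℂ) : Continuous (pl s γ) := by unfold pl; fun_prop

lemma pl_bd (s : ℕ) (γ : ℕ → ℂ) : BD (pl s γ) := BD.of_cont (pl_cont s γ).continuousAt

lemma low_sing {N : ℕ} (s : ℕ) (κ₀ : ℂ) (p q : ℕ → Fin N → ℂ) (i j : Fin N) :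
    BD (fun ε => lowerBlock s κ₀ p q (κ₀ + ε) i j -
      (ε ^ s)⁻¹ * pl s (fun n => p n i) ε * pl s (fun n => q n j) ε) := by
  have h1 : BD (fun ε => - ∑ x ∈ (Finset.range s ×ˢ Finset.range s).filter
      (fun x => ¬ x.1 + x.2 < s), p (x.1 + 1) i * q (x.2 + 1) j * ε ^ (x.1 + x.2 - s)) :=
    BD.of_cont (by fun_prop)
  refine IsBigO.congr' h1 ?_ EventuallyEq.rfl
  filter_upwards [self_mem_nhdsWithin] with ε hε
  have hε : ε ≠ 0 := hε
  have h2 : lowerBlock s κ₀ p q (κ₀ + ε) i j = 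
      ∑ x ∈ (Finset.range s ×ˢ Finset.range s).filter
      (fun x => x.1 + x.2 < s), (ε ^ s)⁻¹ * (p (x.1 + 1) i * ε ^ x.1 * (q (x.2 + 1) j * ε ^ x.2)) := by
    simp only [lowerBlock, Matrix.sum_apply, Matrix.smul_apply, vecMulVec_apply]
    rw [Finset.sum_sigma']
    refine Finset.sum_bij' (fun x _ => (x.1 - x.2, x.2 - 1))
      (fun x _ => ⟨x.1 + x.2 + 1, x.2 + 1⟩) ?_ ?_ ?_ ?_ ?_
    · rintro ⟨l, m⟩ h; simp at h ⊢; omega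
    · rintro ⟨l, m⟩ h; simp at h ⊢; omega
    · rintro ⟨l, m⟩ h; simp at h ⊢; omega
    · rintro ⟨l, m⟩ h; simp at h ⊢
    · rintro ⟨l, m⟩ h
      simp only [Finset.mem_sigma, Finset.mem_Icc] at h
      have e1 : l - m + 1 = l + 1 - m := by omega
      have e2 : m - 1 + 1 = m := by omega
      have e3 : ε ^ (-((s:ℤ) + 1 - l)) = (ε ^ s)⁻¹ * (ε ^ (l - m) * ε ^ (m - 1)) := by
        rw [← pow_add, ← zpow_natCast, ← zpow_natCast, ← _root_.zpow_neg, ← zpow_add₀ hε]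
        congr 1 <;> omega
      simp only [add_sub_cancel_left, e1, e2, e3, smul_eq_mul]
      ring
  rw [h2, mul_assoc, pl, pl, Finset.sum_mul_sum, ← Finset.sum_product', Finset.mul_sum,
    ← Finset.sum_filter_add_sum_filter_not (Finset.range s ×ˢ Finset.range s)
      (fun x => x.1 + x.2 < s), sub_add_eq_sub_sub, sub_self, zero_sub, neg_inj]
  refine Finset.sum_congr rfl fun x hx => ?_
  simp only [Finset.mem_filter, not_lt] at hx
  have e3 : ε ^ (x.1 + x.2 - s) = (ε ^ s)⁻¹ * (ε ^ x.1 * ε ^ x.2) := by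
    rw [← pow_add, pow_sub₀ _ hε hx.2, mul_comm]
  rw [e3]; ring

lemma exists_rinv {N : ℕ} {A : Type*} [Fintype A] [DecidableEq A] (v : A → Fin N → ℂ)
    (h : LinearIndependent ℂ v) :
    ∃ R : Matrix (Fin N) A ℂ, Matrix.of v * R = 1 := by
  have hinj : LinearMap.ker (Fintype.linearCombination ℂ v) = ⊥ :=
    LinearMap.ker_eq_bot.2 (linearIndependent_iff_injective_fintypeLinearCombination.1 h)
  obtain ⟨L, hL⟩ := LinearMap.exists_leftInverse_of_injective _ hinj
  refine ⟨(LinearMap.toMatrix' L).transpose, ?_⟩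
  ext a b
  have h1 : L (v a) b = (1 : Matrix A A ℂ) a b := by
    have := LinearMap.congr_fun hL (Pi.single a 1)
    simp only [LinearMap.comp_apply, Fintype.linearCombination_apply_single, one_smul,
      LinearMap.id_apply] at this
    rw [this, Matrix.one_apply, Pi.single_apply]
    simp [eq_comm]
  rw [← h1, ← LinearMap.toMatrix'_mulVec L (v a)]
  simp [Matrix.mul_apply, Matrix.mulVec, dotProduct, mul_comm]

lemma bd_of_comb {N : ℕ} {A : Type*} [Fintype A] [DecidableEq A] (Q : ℂ → Matrix A (Fin N) ℂ)
    (hQ : Continuous Q) (hind : LinearIndependent ℂ (fun ν : A => Q 0 ν)) (g : ℂ → A → ℂ)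
    (hg : ∀ j, BD (fun ε => (g ε ᵥ* Q ε) j)) (ν : A) : BD (fun ε => g ε ν) := by
  obtain ⟨R, hR⟩ := exists_rinv (Q 0) hind
  have hR : Q 0 * R = 1 := hR
  have hM : Continuous (fun ε => Q ε * R) := by fun_prop
  have hdet : ContinuousAt (fun ε => (Q ε * R).det) 0 := (hM.matrix_det).continuousAt
  have hne : ∀ᶠ ε in 𝓝[≠] (0:ℂ), (Q ε * R).det ≠ 0 := by
    apply Filter.Eventually.filter_mono nhdsWithin_le_nhds
    exact hdet.eventually_ne (by simp [hR])
  have hinv : ContinuousAt (fun ε => (Q ε * R)⁻¹) 0 := by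
    have : ContinuousAt (Inv.inv : Matrix A A ℂ → _) (Q 0 * R) := by
      apply continuousAt_matrix_inv
      rw [hR, Matrix.det_one]
      rw [Ring.inverse_eq_inv']
      exact continuousAt_inv₀ one_ne_zero
    exact ContinuousAt.comp (f := fun ε => Q ε * R) this hM.continuousAt
  have hB : BD (fun ε => ∑ x : A, (∑ j : Fin N, (g ε ᵥ* Q ε) j * R j x) * (Q ε * R)⁻¹ x ν) := by
    refine BD.sum fun x _ => BD.mul (BD.sum fun j _ => (hg j).mul (BD.const _)) (BD.of_cont ?_)
    exact continuousAt_pi.1 (continuousAt_pi.1 hinv x) ν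
  refine IsBigO.congr' hB ?_ EventuallyEq.rfl
  filter_upwards [hne] with ε hε
  have : g ε = ((g ε ᵥ* Q ε) ᵥ* R) ᵥ* (Q ε * R)⁻¹ := by
    rw [Matrix.vecMul_vecMul (g ε), Matrix.vecMul_vecMul, Matrix.mul_nonsing_inv _ (isUnit_iff_ne_zero.2 hε),
      Matrix.vecMul_one]
  conv_rhs => rw [this]
  rfl


/-- summation representation of the soliton matrix.  If `Γ(k)Γinv(k) = I` away
from the poles, the rows `{q^{(ν)}_1 : κ_ν = κ}` are linearly independent at each point `κ`,
and `K̄` is invertible, then `Γ(k) = I − P·K̄⁻¹·𝒟̄(k)·P̄` for every `k` not among the `κ̄_ν`. -/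
theorem stmt4 (N r₁ : ℕ) (hN : 1 ≤ N) (hr₁ : 1 ≤ r₁)
    (s : Fin r₁ → ℕ) (hs : ∀ ν, 1 ≤ s ν)
    (κ κb : Fin r₁ → ℂ) (hκ : ∀ μ ν, κ μ ≠ κb ν)
    (qb pb p q : Fin r₁ → ℕ → Fin N → ℂ)
    (Γ Γinv : ℂ → Matrix (Fin N) (Fin N) ℂ)
    (hΓ : ∀ k, Γ k = 1 + ∑ ν : Fin r₁, upperBlock (s ν) (κb ν) (qb ν) (pb ν) k)
    (hΓinv : ∀ k, Γinv k = 1 + ∑ ν : Fin r₁, lowerBlock (s ν) (κ ν) (p ν) (q ν) k)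
    (hprod : ∀ k : ℂ, (∀ ν, k ≠ κ ν) → (∀ ν, k ≠ κb ν) → Γ k * Γinv k = 1)
    (hindep : ∀ κ₀ : ℂ, LinearIndependent ℂ fun ν : {ν : Fin r₁ // κ ν = κ₀} => q ν.1 1)
    (hKunit : IsUnit (Kbar s κ κb pb p))
    (Pmat : Matrix (Fin N) ((ν : Fin r₁) × Fin (s ν)) ℂ)
    (hPmat : ∀ i x, Pmat i x = p x.1 ((x.2 : ℕ) + 1) i)
    (Pbmat : Matrix ((ν : Fin r₁) × Fin (s ν)) (Fin N) ℂ)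
    (hPbmat : ∀ x i, Pbmat x i = pb x.1 ((x.2 : ℕ) + 1) i) :
    ∀ k : ℂ, (∀ ν, k ≠ κb ν) →
      Γ k = 1 - Pmat * ((Kbar s κ κb pb p)⁻¹ * (DbarMat s κb k * Pbmat)) := by
  classical
  -- bounded entries of Γ
  have hΓe : ∀ k i j, Γ k i j = (1 : Matrix (Fin N) (Fin N) ℂ) i j +
      ∑ ν : Fin r₁, ∑ a : Fin (s ν), qb ν (s ν - a) i *
      ∑ b ∈ Finset.range (a + 1), ((k - κb ν) ^ (a - b + 1))⁻¹ * pb ν (b + 1) j := by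
    intro k i j
    rw [hΓ, Matrix.add_apply, upper_eq]
  have hΓbd : ∀ μ i j, BD (fun ε => Γ (κ μ + ε) i j) := by
    intro μ i j
    simp only [hΓe]
    refine BD.add (BD.const _) (BD.sum fun ν _ => BD.sum fun a _ => BD.mul (BD.const _)
      (BD.sum fun b _ => BD.mul (BD.of_cont ?_) (BD.const _)))
    refine ContinuousAt.inv₀ (by fun_prop) (pow_ne_zero _ ?_)
    simpa [sub_eq_zero] using hκ μ ν
  -- vanishing
  have hvan : ∀ μ i, BD (fun ε => (ε ^ s μ)⁻¹ *
      ∑ j, Γ (κ μ + ε) i j * pl (s μ) (fun n => p μ n j) ε) := by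
    intro μ i
    let A := {ν : Fin r₁ // κ ν = κ μ}
    let Q : ℂ → Matrix A (Fin N) ℂ := fun ε => Matrix.of fun ν j =>
      pl (s ν.1) (fun n => q ν.1 n j) ε
    have hQ : Continuous Q := continuous_pi fun ν => continuous_pi fun j =>
      pl_cont (s ν.1) (fun n => q ν.1 n j)
    have hQ0 : (fun ν : A => Q 0 ν) = fun ν : A => q ν.1 1 := by
      funext ν j
      obtain ⟨m, hm⟩ := Nat.exists_eq_succ_of_ne_zero (Nat.one_le_iff_ne_zero.1 (hs ν.1))
      simp [Q, pl, hm, Finset.sum_range_succ']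
    let g : ℂ → A → ℂ := fun ε ν => (ε ^ s ν.1)⁻¹ *
      ∑ j, Γ (κ μ + ε) i j * pl (s ν.1) (fun n => p ν.1 n j) ε
    refine bd_of_comb Q hQ (by rw [hQ0]; exact hindep (κ μ)) g ?_ ⟨μ, rfl⟩
    intro j'
    let S : Fin r₁ → Fin N → ℂ → ℂ := fun ν j ε => if κ ν = κ μ then
      (ε ^ s ν)⁻¹ * pl (s ν) (fun n => p ν n j) ε * pl (s ν) (fun n => q ν n j') ε else 0
    have hE : ∀ ν j, BD (fun ε => lowerBlock (s ν) (κ ν) (p ν) (q ν) (κ μ + ε) j j' -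
        S ν j ε) := by
      intro ν j
      by_cases h : κ ν = κ μ
      · simp only [S, h, if_true]
        exact low_sing _ _ _ _ _ _
      · simp only [S, h, if_false, sub_zero]
        exact low_cont _ _ _ h _ _ _ _
    have hB : BD (fun ε => (1 : Matrix (Fin N) (Fin N) ℂ) i j' - Γ (κ μ + ε) i j' -
        ∑ j, Γ (κ μ + ε) i j * ∑ ν, (lowerBlock (s ν) (κ ν) (p ν) (q ν) (κ μ + ε) j j' -
        S ν j ε)) :=
      BD.sub (BD.sub (BD.const _) (hΓbd μ i j')) (BD.sum fun j _ => BD.mul (hΓbd μ i j)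
        (BD.sum fun ν _ => hE ν j))
    refine IsBigO.congr' hB ?_ EventuallyEq.rfl
    have hk1 : ∀ᶠ ε in 𝓝[≠] (0:ℂ), ∀ ν, κ μ + ε ≠ κ ν := by
      rw [Filter.eventually_all]
      intro ν
      by_cases h : κ ν = κ μ
      · filter_upwards [self_mem_nhdsWithin] with ε hε
        rw [h]
        simpa using hε
      · apply Filter.Eventually.filter_mono nhdsWithin_le_nhds
        have : ContinuousAt (fun ε : ℂ => κ μ + ε) 0 := by fun_prop
        exact this.eventually_ne (by simpa using fun h' => h h'.symm)
    have hk2 : ∀ᶠ ε in 𝓝[≠] (0:ℂ), ∀ ν, κ μ + ε ≠ κb ν := by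
      rw [Filter.eventually_all]
      intro ν
      apply Filter.Eventually.filter_mono nhdsWithin_le_nhds
      have : ContinuousAt (fun ε : ℂ => κ μ + ε) 0 := by fun_prop
      exact this.eventually_ne (by simpa using hκ μ ν)
    filter_upwards [hk1, hk2] with ε h1 h2
    have h3 := congrFun (congrFun (hprod _ h1 h2) i) j'
    rw [hΓinv, mul_add, mul_one, Matrix.add_apply, Matrix.mul_apply] at h3
    simp only [Matrix.sum_apply] at h3
    have h4 : (g ε ᵥ* Q ε) j' = ∑ j, Γ (κ μ + ε) i j * ∑ ν, S ν j ε := by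
      simp only [Matrix.vecMul, dotProduct, S, Finset.mul_sum]
      have h5 : ∀ j, ∑ ν, Γ (κ μ + ε) i j * (if κ ν = κ μ then
          (ε ^ s ν)⁻¹ * pl (s ν) (fun n => p ν n j) ε * pl (s ν) (fun n => q ν n j') ε else 0) =
          ∑ ν : A, Γ (κ μ + ε) i j * ((ε ^ s ν.1)⁻¹ * pl (s ν.1) (fun n => p ν.1 n j) ε *
            pl (s ν.1) (fun n => q ν.1 n j') ε) := by
        intro j
        simp only [mul_ite, mul_zero]
        rw [← Finset.sum_filter]
        exact Finset.sum_subtype _ (by simp) _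
      simp only [h5]
      rw [Finset.sum_comm]
      refine Finset.sum_congr rfl fun ν _ => ?_
      simp only [g, Q, Matrix.of_apply, Finset.mul_sum, Finset.sum_mul]
      exact Finset.sum_congr rfl fun j _ => by ring
    rw [h4, ← h3]
    simp only [Finset.sum_sub_distrib, mul_sub]
    ring
  -- Taylor expansion
  have hcoef : ∀ μ i (n : Fin (s μ)), p μ (n + 1) i + ∑ ν, ∑ a : Fin (s ν),
      qb ν (s ν - a) i * Kbar s κ κb pb p ⟨ν, a⟩ ⟨μ, n⟩ = 0 := by
    intro μ i n
    have hrow : ∀ ν (a b : ℕ), TE (fun ε => ((κ μ - κb ν + ε) ^ (a - b + 1))⁻¹ *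
        ∑ l ∈ Finset.range (s μ), (pb ν (b+1) ⬝ᵥ p μ (l + 1)) * ε ^ l)
        (fun n => ∑ l ∈ Finset.range (s μ), uco (κ μ - κb ν) (a - b) l *
          if l ≤ n then pb ν (b + 1) ⬝ᵥ p μ (n - l + 1) else 0) (s μ) := by
      intro ν a b
      exact TE.row (sub_ne_zero.2 (hκ μ ν)) (s μ) (a - b) (fun l => pb ν (b+1) ⬝ᵥ p μ (l + 1))
    have hT := (TE.poly (fun l => p μ (l+1) i) (s μ)).add
      (TE.sum Finset.univ fun ν : Fin r₁ => TE.sum Finset.univ fun a : Fin (s ν) =>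
        (TE.sum (Finset.range (a + 1)) fun b => hrow ν a b).const_mul (qb ν (s ν - a) i))
    have h0 : (fun ε => ∑ j, Γ (κ μ + ε) i j * pl (s μ) (fun n => p μ n j) ε)
        =O[𝓝[≠] (0:ℂ)] fun ε => ε ^ s μ := by
      have := IsBigO.mul (isBigO_refl (fun ε : ℂ => ε ^ s μ) (𝓝[≠] (0:ℂ))) (hvan μ i)
      refine this.congr' ?_ (by simp)
      filter_upwards [self_mem_nhdsWithin] with ε hε
      exact mul_inv_cancel_left₀ (pow_ne_zero _ hε) _
    have hfin := fun hh => hT.unique hh n n.2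
    simp only [K_eq]
    refine hfin (h0.congr_left ?_)
    · clear hfin hT h0 hrow
      intro ε
      have hdot : ∀ ν b, ∑ j, pb ν (b + 1) j * pl (s μ) (fun n => p μ n j) ε =
          ∑ l ∈ Finset.range (s μ), (pb ν (b+1) ⬝ᵥ p μ (l + 1)) * ε ^ l := by
        intro ν b
        simp only [pl, dotProduct, Finset.mul_sum, Finset.sum_mul]
        rw [Finset.sum_comm]
        simp only [mul_assoc]
      have hk : ∀ ν, κ μ + ε - κb ν = κ μ - κb ν + ε := fun ν => by ring
      simp only [hΓe, add_mul, Finset.sum_add_distrib, ← hdot, hk]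
      congr 1
      · simp [Matrix.one_apply, pl]
      · simp only [Finset.sum_mul, Finset.mul_sum]
        rw [Finset.sum_comm]
        refine Finset.sum_congr rfl fun ν _ => ?_
        rw [Finset.sum_comm]
        refine Finset.sum_congr rfl fun a _ => ?_
        rw [Finset.sum_comm]
        simp only [mul_assoc]
  let Qt : Matrix (Fin N) ((ν : Fin r₁) × Fin (s ν)) ℂ := Matrix.of fun i x =>
    qb x.1 (s x.1 - x.2) i
  have hP : Pmat = - (Qt * Kbar s κ κb pb p) := by
    ext i ⟨μ, n⟩
    rw [hPmat, Matrix.neg_apply, Matrix.mul_apply, Fintype.sum_sigma]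
    exact eq_neg_of_add_eq_zero_left (hcoef μ i n)
  intro k _
  have hdet : IsUnit (Kbar s κ κb pb p).det := (Matrix.isUnit_iff_isUnit_det _).1 hKunit
  rw [hP, Matrix.neg_mul, sub_neg_eq_add, Matrix.mul_assoc, Matrix.mul_nonsing_inv_cancel_left _ _ hdet]
  ext i j
  rw [hΓe, Matrix.add_apply, Matrix.mul_apply, Fintype.sum_sigma]
  simp only [D_eq s κb pb Pbmat hPbmat]
  rfl
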